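/- A word g is good if and only if g = l_1 · l_2 ⋯ l_k (concatenation) for some k ≥ 0 and some good Lyndon words l_1 ≥ l_2 ≥ ⋯ ≥ l_k (nonincreasing in the lexicographic order). -/

import Mathlib

open scoped BigOperators

noncomputable section

/-- The field `ℚ(q)` of rational functions over `ℚ`. -/
abbrev K : Type := RatFunc ℚ

/-- The indeterminate `q`. -/
abbrev qq : K := RatFunc.X

/-- Words on the alphabet `{w_1, …, w_r}` (the free monoid `M`). -/
abbrev Word (r : ℕ) := List (Fin r)

/-- The space `F` with basis the words, as finitely supported families of coefficients. -/
abbrev FA (r : ℕ) := Word r →₀ K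

variable {r : ℕ}

/-- `(|w|, |x|)` : the symmetric bilinear form evaluated on the degrees of two words,
where `p i j = (α_i, α_j)` is the form on simple roots. -/
def pairW (p : Fin r → Fin r → ℤ) (w x : Word r) : ℤ :=
  (w.map fun i => (x.map fun j => p i j).sum).sum

/-- Auxiliary q-shuffle on *reversed* words:
`shAux p w x` is the q-shuffle of `w.reverse` and `x.reverse`; it implements the recursion
`(w·a) * (x·b) = (w * (x·b))·a + q^{-(|w·a|,|b|)} ((w·a) * x)·b`, `w[] * x = x * w[] = x`. -/
def shAux (p : Fin r → Fin r → ℤ) : Word r → Word r → FA r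
  | [], x => Finsupp.single x.reverse 1
  | w, [] => Finsupp.single w.reverse 1
  | a :: w, b :: x =>
      Finsupp.mapDomain (fun u => u ++ [a]) (shAux p w (b :: x))
      + (qq ^ (-(pairW p (a :: w) [b]))) •
          Finsupp.mapDomain (fun u => u ++ [b]) (shAux p (a :: w) x)
  termination_by w x => w.length + x.length
  decreasing_by all_goals (first | (simp only [List.length_cons]; omega) | omega)

/-- The q-shuffle product `*` on `F`, extended bilinearly from words. -/
def shuffle (p : Fin r → Fin r → ℤ) (f g : FA r) : FA r :=
  f.sum fun w c => g.sum fun x d => (c * d) • shAux p w.reverse x.reverse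

/-- Membership in `𝒰`, the `ℚ(q)`-subalgebra of `(F, *)` generated by the letters `w_i`. -/
inductive InU (p : Fin r → Fin r → ℤ) : FA r → Prop
  | letter (i : Fin r) : InU p (Finsupp.single [i] 1)
  | one : InU p (Finsupp.single ([] : Word r) 1)
  | add : ∀ {f g : FA r}, InU p f → InU p g → InU p (f + g)
  | smul : ∀ (c : K) {f : FA r}, InU p f → InU p (c • f)
  | mul : ∀ {f g : FA r}, InU p f → InU p g → InU p (shuffle p f g)

/-- The degree of a word in `Q⁺`, recorded as the multiplicity of each simple root. -/
def deg (w : Word r) : Fin r → ℕ := fun i => w.count i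

/-- `f` is homogeneous of degree `ν`. -/
def Homog (f : FA r) (ν : Fin r → ℕ) : Prop := ∀ w ∈ f.support, deg w = ν

/-- Lexicographic order on words (a proper left factor is smaller than the word). -/
def wlt (w x : Word r) : Prop := List.Lex (· < ·) w x

def wle (w x : Word r) : Prop := wlt w x ∨ w = x

/-- `g` is the lexicographically largest word occurring (with nonzero coefficient) in `f`. -/
def IsMaxWord (f : FA r) (g : Word r) : Prop :=
  f g ≠ 0 ∧ ∀ w ∈ f.support, wle w g

/-- Good words: words of the form `max(u)` for a nonzero homogeneous `u ∈ 𝒰`. -/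
def IsGood (p : Fin r → Fin r → ℤ) (g : Word r) : Prop :=
  ∃ u : FA r, InU p u ∧ (∃ ν, Homog u ν) ∧ IsMaxWord u g

/-- Lyndon words: nonempty words smaller than all their proper nonempty right factors. -/
def IsLyndon (l : Word r) : Prop :=
  l ≠ [] ∧ ∀ u v : Word r, l = u ++ v → u ≠ [] → v ≠ [] → wlt l v

/-- The data of the Cartan matrix `[a_{ij}]` of a finite-dimensional complex simple
Lie algebra of rank `r`: an integral matrix with `2` on the diagonal and nonpositive
off-diagonal entries, symmetrizable by `d_i ∈ {1,2,3}`, whose symmetrization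
`(α_i, α_j) = d_i a_{ij}` is positive definite, and which is indecomposable. -/
structure CartanData (r : ℕ) where
  a : Fin r → Fin r → ℤ
  d : Fin r → ℤ
  diag : ∀ i, a i i = 2
  offdiag : ∀ i j, i ≠ j → a i j ≤ 0
  dval : ∀ i, d i = 1 ∨ d i = 2 ∨ d i = 3
  dsymm : ∀ i j, d i * a i j = d j * a j i
  posdef : ∀ v : Fin r → ℚ, v ≠ 0 → 0 < ∑ i, ∑ j, v i * v j * ((d i * a i j : ℤ) : ℚ)
  indec : ∀ s : Finset (Fin r), s.Nonempty → s ≠ Finset.univ →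
    ∃ i ∈ s, ∃ j, j ∉ s ∧ a i j ≠ 0

/-- The symmetric bilinear form `(α_i, α_j) = d_i a_{ij}` on simple roots. -/
def CartanData.p (C : CartanData r) : Fin r → Fin r → ℤ := fun i j => C.d i * C.a i j


/-!
Deleting the first or the last letter of words is a twisted derivation of the `q`-shuffle product,
so it preserves `𝒰`; it also deletes that letter from the leading word, hence every factor of a good
word is good. Applied to the Lyndon factorization of a good word, this gives one direction.

For the converse, let `l` be Lyndon and `w` a product of words `≤ l`. Then `l ++ w` is the largest
shuffle of `l` and `w`: measure words by their value in a large base after shifting the letters so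
that `l` has value zero; all prefixes of `l` and of `w` then have nonpositive value, so interleaving
them only lowers the total. As the coefficients of the `q`-shuffle product count interleavings at
`q = 1`, they cannot cancel, and `l ++ w` is the leading word of the product of two elements of `𝒰`
with leading words `l` and `w`.
-/
/-! ### Lexicographic order -/

section Lex

variable {α : Type*} [LinearOrder α]

theorem isPrefix_or_append_lt_append {u v : List α} (h : u < v) :
    u <+: v ∨ ∀ s t, u ++ s < v ++ t := by
  induction u generalizing v with
  | nil => exact Or.inl (List.nil_prefix)
  | cons a u ih =>
    cases v with
    | nil => exact absurd h (List.not_lt_nil _)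
    | cons b v =>
      rcases List.cons_lt_cons_iff.1 h with hab | ⟨rfl, huv⟩
      · exact Or.inr fun s t => List.cons_lt_cons_iff.2 (Or.inl hab)
      · exact (ih huv).imp (List.prefix_cons_inj a).2
          fun hlt s t => List.cons_lt_cons_iff.2 (Or.inr ⟨rfl, hlt s t⟩)

theorem append_lt_append_of_length_le {u v : List α} (h : u < v) (hlen : v.length ≤ u.length)
    (s t : List α) : u ++ s < v ++ t :=
  (isPrefix_or_append_lt_append h).elim
    (fun hpre => absurd (hpre.eq_of_length_le hlen) h.ne) fun hlt => hlt s t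

theorem append_singleton_le_append_singleton_iff {u v : List α} (hlen : u.length = v.length)
    {a b : α} : u ++ [a] ≤ v ++ [b] ↔ u < v ∨ u = v ∧ a ≤ b := by
  rcases lt_trichotomy u v with h | rfl | h
  · simp only [h, true_or, iff_true]
    exact (append_lt_append_of_length_le h hlen.ge _ _).le
  · have hlt : u ++ [b] < u ++ [a] ↔ b < a :=
      ⟨fun h => not_le.1 fun hab => by
        rcases hab.lt_or_eq with hab | rfl
        · exact lt_asymm h (List.append_left_lt (List.cons_lt_cons_iff.2 (Or.inl hab)))
        · exact lt_irrefl _ h,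
        fun h => List.append_left_lt (List.cons_lt_cons_iff.2 (Or.inl h))⟩
    simp only [lt_irrefl, true_and, false_or, ← not_lt, hlt]
  · simp only [h.not_gt, h.ne', false_and, or_false, iff_false, not_le]
    exact append_lt_append_of_length_le h hlen.le _ _

theorem append_singleton_le_append_singleton_of_le {u u' z z' : List α} {a b : α}
    (hulen : u.length = u'.length) (hzlen : z.length = z'.length) (hu : u ++ [a] ≤ u' ++ [b])
    (hz : z ≤ z') (heq : z = z' → u = u') : z ++ [a] ≤ z' ++ [b] := by
  refine (append_singleton_le_append_singleton_iff hzlen).2 (hz.lt_or_eq.imp_right fun h => ⟨h, ?_⟩)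
  exact (((append_singleton_le_append_singleton_iff hulen).1 hu).resolve_left (heq h).not_lt).2

end Lex

theorem wlt_iff_lt {w x : Word r} : wlt w x ↔ w < x :=
  Iff.rfl

theorem wle_iff_le {w x : Word r} : wle w x ↔ w ≤ x :=
  (le_iff_lt_or_eq (a := w) (b := x)).symm

/-! ### Lyndon words -/

namespace IsLyndon

theorem singleton (a : Fin r) : IsLyndon [a] := by
  refine ⟨List.cons_ne_nil _ _, fun u v huv hu hv => ?_⟩
  rcases List.append_eq_singleton_iff.1 huv.symm with ⟨rfl, -⟩ | ⟨-, rfl⟩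
  exacts [absurd rfl hu, absurd rfl hv]

theorem append_lt_right {u v : Word r} (hu : u ≠ []) (hv : IsLyndon v) (huv : u < v) :
    u ++ v < v := by
  rcases isPrefix_or_append_lt_append huv with ⟨s, rfl⟩ | hlt
  · have hs : s ≠ [] := by
      rintro rfl
      exact huv.ne (List.append_nil u).symm
    exact List.append_left_lt (hv.2 u s rfl hu hs)
  · simpa only [List.append_nil] using hlt v []

theorem append {u v : Word r} (hu : IsLyndon u) (hv : IsLyndon v) (huv : u < v) :
    IsLyndon (u ++ v) := by
  have hlt : u ++ v < v := append_lt_right hu.1 hv huv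
  refine ⟨List.append_ne_nil_of_left_ne_nil hu.1 v, fun x y hxy hx hy => ?_⟩
  rcases List.append_eq_append_iff.1 hxy with ⟨s, -, rfl⟩ | ⟨s, rfl, rfl⟩
  · rcases eq_or_ne s [] with rfl | hs
    · exact hlt
    · exact hlt.trans (hv.2 s y rfl hs hy)
  · rcases eq_or_ne s [] with rfl | hs
    · simpa only [wlt_iff_lt, List.append_nil, List.nil_append] using hlt
    · exact append_lt_append_of_length_le (hu.2 x s rfl hx hs)
        (List.suffix_append x s).length_le v v

theorem append_le_append_comm {l t : Word r} (hl : IsLyndon l) (ht : t ≤ l) :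
    t ++ l ≤ l ++ t := by
  rcases ht.eq_or_lt with rfl | hlt
  · exact le_rfl
  rcases isPrefix_or_append_lt_append hlt with ⟨s, rfl⟩ | hlt
  · rcases eq_or_ne t [] with rfl | ht
    · simp only [List.nil_append, List.append_nil, le_refl]
    have hs : s ≠ [] := by
      rintro rfl
      exact hlt.ne (List.append_nil t).symm
    have hls : t ++ s < s ++ t := 
      (wlt_iff_lt.1 (hl.2 t s rfl ht hs)).trans_le (not_lt.1 List.le_append_left)
    simpa only [List.append_assoc] using (List.append_left_lt (l₁ := t) hls).le
  · exact (hlt l t).le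

end IsLyndon

theorem exists_lyndon_chain_append_flatten {L : List (Word r)} (hL : ∀ l ∈ L, IsLyndon l)
    (hchain : L.IsChain (· ≥ ·)) {u : Word r} (hu : IsLyndon u) :
    ∃ L' : List (Word r), (∀ l ∈ L', IsLyndon l) ∧ L'.IsChain (· ≥ ·) ∧
      u ++ L.flatten = L'.flatten := by
  induction L generalizing u with
  | nil => exact ⟨[u], by simpa using hu, List.isChain_singleton u, by simp⟩
  | cons v L ih =>
    rcases le_or_gt v u with hvu | huv
    · exact ⟨u :: v :: L, List.forall_mem_cons.2 ⟨hu, hL⟩,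
        List.isChain_cons_cons.2 ⟨hvu, hchain⟩, rfl⟩
    · obtain ⟨hv, hL⟩ := List.forall_mem_cons.1 hL
      obtain ⟨L', hL', hchain', heq⟩ := ih hL hchain.tail (hu.append hv huv)
      exact ⟨L', hL', hchain', by rw [← heq, List.flatten_cons, List.append_assoc]⟩

theorem exists_lyndon_factorization (w : Word r) :
    ∃ L : List (Word r), (∀ l ∈ L, IsLyndon l) ∧ L.IsChain (· ≥ ·) ∧ w = L.flatten := by
  induction w with
  | nil => exact ⟨[], by simp, List.isChain_nil, rfl⟩
  | cons a w ih =>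
    obtain ⟨L, hL, hchain, rfl⟩ := ih
    exact exists_lyndon_chain_append_flatten hL hchain (IsLyndon.singleton a)

/-! ### Shuffles of words -/

/-- `IsShuffle u v z` says that `z` is an interleaving of the words `u` and `v`. Words grow at their
last letter, as in the recursion defining the `q`-shuffle product. -/
inductive IsShuffle {α : Type*} : List α → List α → List α → Prop
  | nil : IsShuffle [] [] []
  | concat_left (a : α) {u v z : List α} :
      IsShuffle u v z → IsShuffle (u ++ [a]) v (z ++ [a])
  | concat_right (a : α) {u v z : List α} :
      IsShuffle u v z → IsShuffle u (v ++ [a]) (z ++ [a])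

namespace IsShuffle

variable {α : Type*} {u v z : List α}

theorem nil_left (v : List α) : IsShuffle [] v v := by
  induction v using List.reverseRecOn with
  | nil => exact nil
  | append_singleton v a ih => exact ih.concat_right a

theorem nil_right (u : List α) : IsShuffle u [] u := by
  induction u using List.reverseRecOn with
  | nil => exact nil
  | append_singleton u a ih => exact ih.concat_left a

theorem perm (h : IsShuffle u v z) : z.Perm (u ++ v) := by
  induction h with
  | nil => exact List.Perm.refl []
  | @concat_left a u v z _ ih =>
    calc (z ++ [a]).Perm (u ++ v ++ [a]) := ih.append_right [a]
      _ = u ++ (v ++ [a]) := List.append_assoc u v [a]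
      _ |>.Perm (u ++ ([a] ++ v)) := List.perm_append_comm.append_left u
      _ = u ++ [a] ++ v := (List.append_assoc u [a] v).symm
  | @concat_right a u v z _ ih => simpa only [List.append_assoc] using ih.append_right [a]

theorem length_eq (h : IsShuffle u v z) : z.length = u.length + v.length := by
  rw [h.perm.length_eq, List.length_append]

theorem exists_ge [LinearOrder α] (h : IsShuffle u v z) {u' v' : List α}
    (hulen : u.length = u'.length) (hvlen : v.length = v'.length) (hu : u ≤ u') (hv : v ≤ v') :
    ∃ z', IsShuffle u' v' z' ∧ z ≤ z' ∧ (z = z' → u = u' ∧ v = v') := by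
  induction h generalizing u' v' with
  | nil =>
    obtain rfl := List.length_eq_zero_iff.1 hulen.symm
    obtain rfl := List.length_eq_zero_iff.1 hvlen.symm
    exact ⟨[], nil, le_rfl, fun _ => ⟨rfl, rfl⟩⟩
  | @concat_left a u v z h ih =>
    rcases List.eq_nil_or_concat' u' with rfl | ⟨u', b, rfl⟩
    · simp at hulen
    replace hulen : u.length = u'.length := by simpa using hulen
    have huu' := (append_singleton_le_append_singleton_iff hulen).1 hu
    obtain ⟨z', hz', hle, heq⟩ := ih hulen hvlen (huu'.elim le_of_lt fun h => h.1.le) hv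
    have hzlen : z.length = z'.length := by rw [h.length_eq, hz'.length_eq, hulen, hvlen]
    refine ⟨z' ++ [b], hz'.concat_left b, append_singleton_le_append_singleton_of_le hulen hzlen hu
      hle fun hz => (heq hz).1, fun hz => ?_⟩
    obtain ⟨rfl, hab⟩ := List.append_inj hz hzlen
    exact ⟨by rw [(heq rfl).1, hab], (heq rfl).2⟩
  | @concat_right a u v z h ih =>
    rcases List.eq_nil_or_concat' v' with rfl | ⟨v', b, rfl⟩
    · simp at hvlen
    replace hvlen : v.length = v'.length := by simpa using hvlen
    have hvv' := (append_singleton_le_append_singleton_iff hvlen).1 hv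
    obtain ⟨z', hz', hle, heq⟩ := ih hulen hvlen hu (hvv'.elim le_of_lt fun h => h.1.le)
    have hzlen : z.length = z'.length := by rw [h.length_eq, hz'.length_eq, hulen, hvlen]
    refine ⟨z' ++ [b], hz'.concat_right b, append_singleton_le_append_singleton_of_le hvlen hzlen hv
      hle fun hz => (heq hz).2, fun hz => ?_⟩
    obtain ⟨rfl, hab⟩ := List.append_inj hz hzlen
    exact ⟨(heq rfl).1, by rw [(heq rfl).2, hab]⟩

end IsShuffle

/-! ### Shuffles of a Lyndon word with a product of smaller words -/

/-- The value in base `r + 2` of the word whose digits are the letters of `w`, each lowered by `c`.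
For `c` with `excess c l = 0`, its sign compares a word with the Lyndon word `l`. -/
def excess (c : ℚ) : Word r → ℚ
  | [] => 0
  | i :: w => (i - c) * (r + 2) ^ w.length + excess c w

theorem excess_append (c : ℚ) (u v : Word r) :
    excess c (u ++ v) = excess c u * (r + 2) ^ v.length + excess c v := by
  induction u with
  | nil => simp [excess]
  | cons i u ih =>
    simp only [List.cons_append, excess, ih, List.length_append, pow_add]
    ring

theorem excess_append_singleton (c : ℚ) (w : Word r) (i : Fin r) :
    excess c (w ++ [i]) = excess c w * (r + 2) + (i - c) := by
  simp [excess_append, excess]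

theorem excess_eq_excess_zero_sub (c : ℚ) (w : Word r) :
    excess c w = excess 0 w - c * ∑ k ∈ Finset.range w.length, ((r : ℚ) + 2) ^ k := by
  induction w with
  | nil => simp [excess]
  | cons i w ih =>
    rw [excess, excess, ih, List.length_cons, Finset.sum_range_succ]
    ring

theorem exists_excess_eq_zero {w : Word r} (hw : w ≠ []) : ∃ c, excess c w = 0 := by
  have hpos : 0 < ∑ k ∈ Finset.range w.length, ((r : ℚ) + 2) ^ k :=
    Finset.sum_pos (fun k _ => by positivity)
      (Finset.nonempty_range_iff.2 (List.length_pos_iff.2 hw).ne')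
  exact ⟨_ / _, by rw [excess_eq_excess_zero_sub, div_mul_cancel₀ _ hpos.ne', sub_self]⟩

theorem excess_lt_excess_add_pow (c : ℚ) {u v : Word r} (hlen : u.length = v.length) :
    excess c u < excess c v + (r + 2) ^ v.length := by
  induction u generalizing v with
  | nil =>
    obtain rfl := List.length_eq_zero_iff.1 hlen.symm
    simp [excess]
  | cons a u ih =>
    obtain ⟨b, v, rfl⟩ := List.exists_cons_of_length_eq_add_one hlen.symm
    replace hlen : u.length = v.length := by simpa using hlen
    have hdigit : (a : ℚ) + 1 ≤ r := by exact_mod_cast a.isLt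
    have hpow : (0 : ℚ) < (r + 2) ^ v.length := by positivity
    have hb : (0 : ℚ) ≤ b := by positivity
    simp only [excess, List.length_cons, hlen, pow_succ]
    nlinarith [ih hlen, hdigit, hpow, hb]

theorem excess_lt_excess (c : ℚ) {u v : Word r} (hlen : u.length = v.length) (huv : u < v) :
    excess c u < excess c v := by
  induction u generalizing v with
  | nil =>
    obtain rfl := List.length_eq_zero_iff.1 hlen.symm
    exact absurd huv (lt_irrefl _)
  | cons a u ih =>
    obtain ⟨b, v, rfl⟩ := List.exists_cons_of_length_eq_add_one hlen.symm
    replace hlen : u.length = v.length := by simpa using hlen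
    simp only [excess, hlen]
    rcases List.cons_lt_cons_iff.1 huv with hab | ⟨rfl, huv'⟩
    · have hdigit : (a : ℚ) + 1 ≤ b := by exact_mod_cast hab
      have hpow : (0 : ℚ) < (r + 2) ^ v.length := by positivity
      nlinarith [excess_lt_excess_add_pow c hlen]
    · exact (add_lt_add_iff_left _).2 (ih hlen huv')

theorem excess_nonpos_of_append_le_append {c : ℚ} {l t : Word r} (hl : l ≠ [])
    (hc : excess c l = 0) (h : t ++ l ≤ l ++ t) : excess c t ≤ 0 := by
  have hle : excess c (t ++ l) ≤ excess c (l ++ t) := by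
    rcases h.eq_or_lt with heq | hlt
    · rw [heq]
    · exact (excess_lt_excess c (by simp [add_comm]) hlt).le
  have hone : (1 : ℚ) < (r + 2) ^ l.length :=
    one_lt_pow₀ (by linarith [(Nat.cast_nonneg r : (0 : ℚ) ≤ r)]) (List.length_pos_iff.2 hl).ne'
  rw [excess_append, excess_append, hc, zero_mul, add_zero, zero_add] at hle
  nlinarith

theorem IsLyndon.excess_nonpos {c : ℚ} {l t : Word r} (hl : IsLyndon l) (hc : excess c l = 0)
    (ht : t ≤ l) : excess c t ≤ 0 :=
  excess_nonpos_of_append_le_append hl.1 hc (hl.append_le_append_comm ht)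

theorem IsLyndon.excess_nonpos_of_prefix_flatten {c : ℚ} {l : Word r} (hl : IsLyndon l)
    (hc : excess c l = 0) {L : List (Word r)} (hL : ∀ m ∈ L, m ≤ l) {t : Word r}
    (ht : t <+: L.flatten) : excess c t ≤ 0 := by
  induction L generalizing t with
  | nil => simp [List.prefix_nil.1 ht, excess]
  | cons m L ih =>
    obtain ⟨hm, hL⟩ := List.forall_mem_cons.1 hL
    obtain ⟨s, hs⟩ := ht
    rcases List.append_eq_append_iff.1 hs with ⟨m', rfl, -⟩ | ⟨t', rfl, ht'⟩
    · exact hl.excess_nonpos hc ((not_lt.1 List.le_append_left).trans hm)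
    · rw [excess_append]
      exact add_nonpos (mul_nonpos_of_nonpos_of_nonneg (hl.excess_nonpos hc hm) (by positivity))
        (ih hL ⟨s, ht'.symm⟩)

-- Reading one more letter multiplies the excess by `r + 2`, which only lowers a nonpositive excess,
-- so interleaving the other word in between cannot increase the total.
theorem IsShuffle.excess_le {c : ℚ} {u v z : Word r} (h : IsShuffle u v z)
    (hu : ∀ t, t <+: u → excess c t ≤ 0) (hv : ∀ t, t <+: v → excess c t ≤ 0) :
    excess c z ≤ excess c u + excess c v := by
  have hr : (0 : ℚ) ≤ r := Nat.cast_nonneg r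
  induction h with
  | nil => simp [excess]
  | @concat_left a u v z _ ih =>
    have hz := ih (fun t ht => hu t (ht.trans (List.prefix_append u [a]))) hv
    rw [excess_append_singleton, excess_append_singleton]
    nlinarith [hv v (List.prefix_refl v), hz, hr]
  | @concat_right a u v z _ ih =>
    have hz := ih hu (fun t ht => hv t (ht.trans (List.prefix_append v [a])))
    rw [excess_append_singleton, excess_append_singleton]
    nlinarith [hu u (List.prefix_refl u), hz, hr]

theorem IsLyndon.shuffle_le_append_flatten {l z : Word r} (hl : IsLyndon l) {L : List (Word r)}
    (hL : ∀ m ∈ L, m ≤ l) (h : IsShuffle l L.flatten z) : z ≤ l ++ L.flatten := by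
  obtain ⟨c, hc⟩ := exists_excess_eq_zero hl.1
  have hle : excess c z ≤ excess c (l ++ L.flatten) := calc
    excess c z ≤ excess c l + excess c L.flatten :=
      h.excess_le (fun t ht => hl.excess_nonpos hc (not_lt.1 ht.le))
        fun t => hl.excess_nonpos_of_prefix_flatten hc hL
    _ = excess c (l ++ L.flatten) := by rw [excess_append, hc, zero_mul]
  refine not_lt.1 fun hlt => hle.not_gt (excess_lt_excess c ?_ hlt)
  rw [List.length_append, h.length_eq]

/-! ### The `q`-shuffle product as a bilinear map -/

section QShuffle

variable (p : Fin r → Fin r → ℤ)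

/-- The `q`-shuffle product of two words. -/
def wordShuffle (w x : Word r) : FA r :=
  shAux p w.reverse x.reverse

theorem wordShuffle_nil_left (x : Word r) : wordShuffle p [] x = Finsupp.single x 1 := by
  rw [wordShuffle, List.reverse_nil, shAux, List.reverse_reverse]

theorem wordShuffle_nil_right (w : Word r) : wordShuffle p w [] = Finsupp.single w 1 := by
  rw [wordShuffle, List.reverse_nil]
  cases h : w.reverse with
  | nil => rw [List.reverse_eq_nil_iff.1 h, shAux, List.reverse_nil]
  | cons a v => rw [shAux, ← h, List.reverse_reverse]; exact List.cons_ne_nil a v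

theorem wordShuffle_append_singleton (w x : Word r) (a b : Fin r) :
    wordShuffle p (w ++ [a]) (x ++ [b]) =
      Finsupp.mapDomain (· ++ [a]) (wordShuffle p w (x ++ [b])) +
        qq ^ (-((w ++ [a]).map (p · b)).sum) •
          Finsupp.mapDomain (· ++ [b]) (wordShuffle p (w ++ [a]) x) := by
  simp [wordShuffle, shAux, pairW, add_comm]

/-- The `q`-shuffle product `shuffle p`, bundled as a bilinear map. -/
def qShuffle : FA r →ₗ[K] FA r →ₗ[K] FA r :=
  Finsupp.linearCombination K fun w => Finsupp.linearCombination K (wordShuffle p w)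

theorem shuffle_eq_qShuffle (f g : FA r) : shuffle p f g = qShuffle p f g := by
  simp only [shuffle, qShuffle, Finsupp.linearCombination_apply, LinearMap.finsupp_sum_apply,
    LinearMap.smul_apply, Finsupp.smul_sum, mul_smul, wordShuffle]

theorem qShuffle_single_one (w x : Word r) :
    qShuffle p (Finsupp.single w 1) (Finsupp.single x 1) = wordShuffle p w x := by
  simp only [qShuffle, Finsupp.linearCombination_single, one_smul]

theorem qShuffle_apply (f g : FA r) (z : Word r) :
    qShuffle p f g z = f.sum fun w c => g.sum fun x d => c * d * wordShuffle p w x z := by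
  simp only [← shuffle_eq_qShuffle, shuffle, Finsupp.sum_apply, Finsupp.smul_apply, smul_eq_mul,
    wordShuffle]

end QShuffle

/-! ### Letter deletions are twisted derivations -/

/-- The linear map deleting a first letter `a`, and killing the words not starting with `a`. -/
def deleteFirst (a : Fin r) : FA r →ₗ[K] FA r :=
  Finsupp.lcomapDomain (a :: ·) List.cons_injective

/-- The linear map deleting a last letter `b`, and killing the words not ending with `b`. -/
def deleteLast (b : Fin r) : FA r →ₗ[K] FA r :=
  Finsupp.lcomapDomain (· ++ [b]) (List.append_left_injective [b])

/-- The diagonal map multiplying each word `w` by `q^{-n}`, where `n` is the sum of `ν` over the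
letters of `w`. -/
def twist (ν : Fin r → ℤ) : FA r →ₗ[K] FA r where
  toFun f := Finsupp.onFinset f.support (fun w => qq ^ (-(w.map ν).sum) * f w) fun _ hw =>
    Finsupp.mem_support_iff.2 (right_ne_zero_of_mul hw)
  map_add' f g := Finsupp.ext fun w => mul_add _ (f w) (g w)
  map_smul' c f := Finsupp.ext fun w => mul_left_comm _ c (f w)

theorem deleteFirst_apply (a : Fin r) (f : FA r) (w : Word r) : deleteFirst a f w = f (a :: w) :=
  rfl

theorem deleteLast_apply (b : Fin r) (f : FA r) (w : Word r) : deleteLast b f w = f (w ++ [b]) :=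
  rfl

theorem mem_support_deleteFirst {a : Fin r} {f : FA r} {w : Word r} :
    w ∈ (deleteFirst a f).support ↔ a :: w ∈ f.support := by
  simp only [Finsupp.mem_support_iff, deleteFirst_apply]

theorem mem_support_deleteLast {b : Fin r} {f : FA r} {w : Word r} :
    w ∈ (deleteLast b f).support ↔ w ++ [b] ∈ f.support := by
  simp only [Finsupp.mem_support_iff, deleteLast_apply]

theorem twist_apply (ν : Fin r → ℤ) (f : FA r) (w : Word r) :
    twist ν f w = qq ^ (-(w.map ν).sum) * f w :=
  rfl

theorem twist_single (ν : Fin r → ℤ) (w : Word r) (c : K) :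
    twist ν (Finsupp.single w c) = qq ^ (-(w.map ν).sum) • Finsupp.single w c := by
  ext x
  by_cases hx : x = w
  · rw [twist_apply, hx, Finsupp.smul_apply, smul_eq_mul]
  · simp [twist_apply, Finsupp.single_eq_of_ne hx]

theorem twist_comm (ν μ : Fin r → ℤ) (f : FA r) : twist ν (twist μ f) = twist μ (twist ν f) :=
  Finsupp.ext fun w => mul_left_comm _ _ (f w)

theorem deleteFirst_twist (ν : Fin r → ℤ) (a : Fin r) (f : FA r) :
    deleteFirst a (twist ν f) = qq ^ (-ν a) • twist ν (deleteFirst a f) := by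
  ext w
  simp only [deleteFirst_apply, twist_apply, Finsupp.smul_apply, smul_eq_mul, List.map_cons,
    List.sum_cons, neg_add, zpow_add₀ (RatFunc.X_ne_zero : qq ≠ 0), mul_assoc]

theorem deleteLast_twist (ν : Fin r → ℤ) (b : Fin r) (f : FA r) :
    deleteLast b (twist ν f) = qq ^ (-ν b) • twist ν (deleteLast b f) := by
  ext w
  simp only [deleteLast_apply, twist_apply, Finsupp.smul_apply, smul_eq_mul, List.map_append,
    List.sum_append, List.map_cons, List.map_nil, List.sum_singleton, neg_add,
    zpow_add₀ (RatFunc.X_ne_zero : qq ≠ 0)]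
  ring

theorem deleteFirst_deleteLast (a b : Fin r) (f : FA r) :
    deleteFirst a (deleteLast b f) = deleteLast b (deleteFirst a f) := by
  ext w
  rfl

theorem deleteFirst_single_nil (a : Fin r) (c : K) :
    deleteFirst a (Finsupp.single [] c) = 0 :=
  Finsupp.ext fun w => Finsupp.single_eq_of_ne (List.cons_ne_nil a w)

theorem deleteLast_single_nil (b : Fin r) (c : K) :
    deleteLast b (Finsupp.single [] c) = 0 :=
  Finsupp.ext fun w => Finsupp.single_eq_of_ne (List.append_ne_nil_of_right_ne_nil w (by simp))

theorem deleteFirst_single_singleton (a i : Fin r) (c : K) :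
    deleteFirst a (Finsupp.single [i] c) = if i = a then Finsupp.single [] c else 0 := by
  ext w
  by_cases hia : i = a <;> simp [deleteFirst_apply, Finsupp.single_apply, hia, eq_comm (b := w)]

theorem deleteLast_mapDomain (a b : Fin r) (f : FA r) :
    deleteLast b (Finsupp.mapDomain (· ++ [a]) f) = if a = b then f else 0 := by
  split_ifs with hab
  · rw [hab]
    exact Finsupp.ext fun w => Finsupp.mapDomain_apply (List.append_left_injective [b]) f w
  · refine Finsupp.ext fun w => Finsupp.mapDomain_of_notMem_range _ _ ?_
    rintro ⟨v, hv⟩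
    exact hab (List.singleton_injective (List.append_inj' hv rfl).2)

theorem deleteLast_single_append_singleton (a b : Fin r) (w : Word r) (c : K) :
    deleteLast b (Finsupp.single (w ++ [a]) c) = if a = b then Finsupp.single w c else 0 := by
  rw [← deleteLast_mapDomain, Finsupp.mapDomain_single]

section Leibniz

variable (p : Fin r → Fin r → ℤ)

theorem deleteLast_wordShuffle (b : Fin r) (w x : Word r) :
    deleteLast b (wordShuffle p w x) =
      qShuffle p (deleteLast b (Finsupp.single w 1)) (Finsupp.single x 1) +
        qShuffle p (twist (p · b) (Finsupp.single w 1)) (deleteLast b (Finsupp.single x 1)) := by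
  rcases List.eq_nil_or_concat' w with rfl | ⟨w, a, rfl⟩ <;>
  rcases List.eq_nil_or_concat' x with rfl | ⟨x, a', rfl⟩ <;>
  simp only [wordShuffle_nil_left, wordShuffle_nil_right, wordShuffle_append_singleton,
    twist_single, deleteLast_single_nil, deleteLast_single_append_singleton, deleteLast_mapDomain,
    map_add, map_smul, map_zero, LinearMap.zero_apply, LinearMap.smul_apply, add_zero, zero_add]
  · split_ifs <;> simp [qShuffle_single_one, wordShuffle_nil_left]
  · split_ifs <;> simp [qShuffle_single_one, wordShuffle_nil_right]
  · congr 1 <;> split_ifs with h <;> simp [qShuffle_single_one, h]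

theorem deleteLast_qShuffle (b : Fin r) (f g : FA r) :
    deleteLast b (qShuffle p f g) =
      qShuffle p (deleteLast b f) g + qShuffle p (twist (p · b) f) (deleteLast b g) := by
  suffices h : (qShuffle p).compr₂ (deleteLast b) = (qShuffle p).comp (deleteLast b) +
      (qShuffle p).compl₁₂ (twist (p · b)) (deleteLast b) from LinearMap.congr_fun₂ h f g
  ext1 w
  ext1
  ext1 x
  ext1
  simpa [qShuffle_single_one] using deleteLast_wordShuffle p b w x

theorem qShuffle_apply_nil (f g : FA r) : qShuffle p f g [] = f [] * g [] := by
  suffices h : (qShuffle p).compr₂ (Finsupp.lapply []) =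
      (LinearMap.mul K K).compl₁₂ (Finsupp.lapply []) (Finsupp.lapply []) from
    LinearMap.congr_fun₂ h f g
  ext1 w
  ext1
  ext1 x
  ext1
  rcases List.eq_nil_or_concat' w with rfl | ⟨w, a, rfl⟩ <;>
  rcases List.eq_nil_or_concat' x with rfl | ⟨x, b, rfl⟩ <;>
  simp [qShuffle_single_one, wordShuffle_nil_left, wordShuffle_nil_right,
    wordShuffle_append_singleton, Finsupp.mapDomain_of_notMem_range]

theorem twist_qShuffle (ν : Fin r → ℤ) (f g : FA r) :
    twist ν (qShuffle p f g) = qShuffle p (twist ν f) (twist ν g) := by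
  ext y
  induction y using List.reverseRecOn generalizing f g with
  | nil => simp [twist_apply, qShuffle_apply_nil]
  | append_singleton y b ih =>
    simp only [← deleteLast_apply, deleteLast_twist, deleteLast_qShuffle, map_add, map_smul,
      LinearMap.smul_apply, Finsupp.smul_apply, Finsupp.add_apply, ih, twist_comm ν (p · b),
      smul_add]

theorem deleteFirst_qShuffle (a : Fin r) (f g : FA r) :
    deleteFirst a (qShuffle p f g) =
      qShuffle p (deleteFirst a f) (twist (p a) g) + qShuffle p f (deleteFirst a g) := by
  ext y
  induction y using List.reverseRecOn generalizing f g with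
  | nil =>
    have h := DFunLike.congr_fun (deleteLast_qShuffle p a f g) []
    simpa [twist_apply, qShuffle_apply_nil, deleteFirst_apply, deleteLast_apply] using h
  | append_singleton y b ih =>
    simp only [← deleteLast_apply, ← deleteFirst_deleteLast, deleteLast_qShuffle, map_add, ih,
      deleteFirst_twist, deleteLast_twist, map_smul, LinearMap.smul_apply, Finsupp.add_apply,
      Finsupp.smul_apply]
    ring

end Leibniz

namespace InU

variable {p : Fin r → Fin r → ℤ} {f g : FA r}

theorem zero : InU p (0 : FA r) := by
  simpa only [zero_smul] using InU.one.smul (p := p) 0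

theorem qShuffle (hf : InU p f) (hg : InU p g) : InU p (qShuffle p f g) :=
  shuffle_eq_qShuffle p f g ▸ hf.mul hg

theorem twist (ν : Fin r → ℤ) (hf : InU p f) : InU p (twist ν f) := by
  induction hf with
  | letter i => rw [twist_single]; exact (letter i).smul _
  | one => rw [twist_single]; exact one.smul _
  | add _ _ ihf ihg => rw [map_add]; exact ihf.add ihg
  | smul c _ ih => rw [map_smul]; exact ih.smul c
  | mul _ _ ihf ihg => rw [shuffle_eq_qShuffle, twist_qShuffle]; exact ihf.qShuffle ihg

theorem deleteFirst (a : Fin r) (hf : InU p f) : InU p (deleteFirst a f) := by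
  induction hf with
  | letter i => rw [deleteFirst_single_singleton]; split_ifs; exacts [one, zero]
  | one => rw [deleteFirst_single_nil]; exact zero
  | add _ _ ihf ihg => rw [map_add]; exact ihf.add ihg
  | smul c _ ih => rw [map_smul]; exact ih.smul c
  | mul hf hg ihf ihg =>
    rw [shuffle_eq_qShuffle, deleteFirst_qShuffle]
    exact (ihf.qShuffle (hg.twist _)).add (hf.qShuffle ihg)

theorem deleteLast (b : Fin r) (hf : InU p f) : InU p (deleteLast b f) := by
  induction hf with
  | letter i =>
    rw [← List.nil_append [i], deleteLast_single_append_singleton]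
    split_ifs
    exacts [one, zero]
  | one => rw [deleteLast_single_nil]; exact zero
  | add _ _ ihf ihg => rw [map_add]; exact ihf.add ihg
  | smul c _ ih => rw [map_smul]; exact ih.smul c
  | mul hf hg ihf ihg =>
    rw [shuffle_eq_qShuffle, deleteLast_qShuffle]
    exact (ihf.qShuffle hg).add ((hf.twist _).qShuffle ihg)

end InU

/-! ### Positivity of the coefficients -/

/-- A rational function is positive at `a` if it is a quotient of two polynomials taking positive
values at `a`. As `RatFunc.eval` does not detect poles, the quotient is part of the data. -/
def IsPosAt {F : Type*} [Field F] [LinearOrder F] (a : F) (f : RatFunc F) : Prop :=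
  ∃ P Q : Polynomial F, 0 < P.eval a ∧ 0 < Q.eval a ∧
    f = algebraMap (Polynomial F) (RatFunc F) P / algebraMap (Polynomial F) (RatFunc F) Q

namespace IsPosAt

variable {F : Type*} [Field F] [LinearOrder F] {a : F} {f g : RatFunc F}

theorem algebraMap_ne_zero {P : Polynomial F} (hP : 0 < P.eval a) :
    algebraMap (Polynomial F) (RatFunc F) P ≠ 0 := by
  refine RatFunc.algebraMap_ne_zero ?_
  rintro rfl
  simp at hP

theorem ne_zero (hf : IsPosAt a f) : f ≠ 0 := by
  obtain ⟨P, Q, hP, hQ, rfl⟩ := hf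
  exact div_ne_zero (algebraMap_ne_zero hP) (algebraMap_ne_zero hQ)

theorem inv (hf : IsPosAt a f) : IsPosAt a f⁻¹ := by
  obtain ⟨P, Q, hP, hQ, rfl⟩ := hf
  exact ⟨Q, P, hQ, hP, inv_div _ _⟩

variable [IsStrictOrderedRing F]

theorem one (a : F) : IsPosAt a 1 :=
  ⟨1, 1, by simp, by simp, by simp⟩

theorem X_pow (ha : 0 < a) (n : ℕ) : IsPosAt a (RatFunc.X ^ n) :=
  ⟨Polynomial.X ^ n, 1, by simpa using pow_pos ha n, by simp, by simp⟩

theorem X_zpow (ha : 0 < a) : ∀ n : ℤ, IsPosAt a (RatFunc.X ^ n)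
  | .ofNat n => by simpa using X_pow ha n
  | .negSucc n => by simpa using (X_pow ha (n + 1)).inv

theorem add (hf : IsPosAt a f) (hg : IsPosAt a g) : IsPosAt a (f + g) := by
  obtain ⟨P, Q, hP, hQ, rfl⟩ := hf
  obtain ⟨P', Q', hP', hQ', rfl⟩ := hg
  refine ⟨P * Q' + Q * P', Q * Q', ?_, by simpa using mul_pos hQ hQ', ?_⟩
  · simpa using add_pos (mul_pos hP hQ') (mul_pos hQ hP')
  · simp only [map_add, map_mul, div_add_div _ _ (algebraMap_ne_zero hQ) (algebraMap_ne_zero hQ')]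

theorem mul (hf : IsPosAt a f) (hg : IsPosAt a g) : IsPosAt a (f * g) := by
  obtain ⟨P, Q, hP, hQ, rfl⟩ := hf
  obtain ⟨P', Q', hP', hQ', rfl⟩ := hg
  exact ⟨P * P', Q * Q', by simpa using mul_pos hP hP', by simpa using mul_pos hQ hQ',
    by simp only [map_mul, div_mul_div_comm]⟩

end IsPosAt

/-- A rational function is nonnegative at `a` if it is zero or positive at `a`. This excludes
nonzero functions vanishing at `a`. -/
def IsNonnegAt {F : Type*} [Field F] [LinearOrder F] (a : F) (f : RatFunc F) : Prop :=
  f = 0 ∨ IsPosAt a f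

namespace IsNonnegAt

variable {F : Type*} [Field F] [LinearOrder F] {a : F} {f g : RatFunc F}

theorem ite_zero (P : Prop) [Decidable P] (hf : IsNonnegAt a f) :
    IsNonnegAt a (if P then f else 0) := by
  split_ifs
  exacts [hf, Or.inl rfl]

variable [IsStrictOrderedRing F]

theorem add_isPosAt (hf : IsNonnegAt a f) (hg : IsPosAt a g) : IsPosAt a (f + g) := by
  rcases hf with rfl | hf
  · rwa [zero_add]
  · exact hf.add hg

theorem add (hf : IsNonnegAt a f) (hg : IsNonnegAt a g) : IsNonnegAt a (f + g) := by
  rcases hg with rfl | hg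
  · rwa [add_zero]
  · exact Or.inr (hf.add_isPosAt hg)

theorem isPosAt_mul (hf : IsPosAt a f) (hg : IsNonnegAt a g) : IsNonnegAt a (f * g) :=
  hg.imp (fun h => by rw [h, mul_zero]) hf.mul

end IsNonnegAt

section WordShuffle

variable (p : Fin r → Fin r → ℤ)

theorem wordShuffle_append_singleton_apply (w x y : Word r) (a b c : Fin r) :
    wordShuffle p (w ++ [a]) (x ++ [b]) (y ++ [c]) =
      (if a = c then wordShuffle p w (x ++ [b]) y else 0) +
        qq ^ (-((w ++ [a]).map (p · b)).sum) *
          (if b = c then wordShuffle p (w ++ [a]) x y else 0) := by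
  rw [← deleteLast_apply, wordShuffle_append_singleton, map_add, map_smul, deleteLast_mapDomain,
    deleteLast_mapDomain]
  split_ifs <;> simp

theorem wordShuffle_append_singleton_apply_nil (w x : Word r) (a b : Fin r) :
    wordShuffle p (w ++ [a]) (x ++ [b]) [] = 0 := by
  simp [← qShuffle_single_one, qShuffle_apply_nil]

theorem isShuffle_of_wordShuffle_apply_ne_zero {w x z : Word r} (h : wordShuffle p w x z ≠ 0) :
    IsShuffle w x z := by
  induction w using List.reverseRecOn generalizing x z with
  | nil =>
    rw [wordShuffle_nil_left] at h
    obtain rfl : z = x := by_contra fun hzx => h (Finsupp.single_eq_of_ne hzx)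
    exact IsShuffle.nil_left z
  | append_singleton w a ihw =>
    induction x using List.reverseRecOn generalizing z with
    | nil =>
      rw [wordShuffle_nil_right] at h
      obtain rfl : z = w ++ [a] := by_contra fun hzx => h (Finsupp.single_eq_of_ne hzx)
      exact IsShuffle.nil_right _
    | append_singleton x b ihx =>
      rcases List.eq_nil_or_concat' z with rfl | ⟨y, c, rfl⟩
      · exact absurd (wordShuffle_append_singleton_apply_nil p w x a b) h
      rw [wordShuffle_append_singleton_apply] at h
      by_cases hleft : a = c ∧ wordShuffle p w (x ++ [b]) y ≠ 0
      · obtain ⟨rfl, hne⟩ := hleft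
        exact (ihw hne).concat_left a
      · rw [← ite_ne_right_iff, not_not] at hleft
        rw [hleft, zero_add] at h
        obtain ⟨rfl, hne⟩ := ite_ne_right_iff.1 (right_ne_zero_of_mul h)
        exact (ihx hne).concat_right b

-- At `q = 1` the coefficient of `z` counts the ways of interleaving `w` and `x` into `z`.
theorem isNonnegAt_one_wordShuffle_apply (w x z : Word r) :
    IsNonnegAt 1 (wordShuffle p w x z) := by
  have hsingle (v z : Word r) : IsNonnegAt 1 (Finsupp.single v (1 : K) z) := by
    rw [Finsupp.single_apply]
    exact IsNonnegAt.ite_zero _ (Or.inr (IsPosAt.one 1))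
  induction w using List.reverseRecOn generalizing x z with
  | nil => exact wordShuffle_nil_left p x ▸ hsingle x z
  | append_singleton w a ihw =>
    induction x using List.reverseRecOn generalizing z with
    | nil => exact wordShuffle_nil_right p (w ++ [a]) ▸ hsingle (w ++ [a]) z
    | append_singleton x b ihx =>
      rcases List.eq_nil_or_concat' z with rfl | ⟨y, c, rfl⟩
      · exact Or.inl (wordShuffle_append_singleton_apply_nil p w x a b)
      rw [wordShuffle_append_singleton_apply]
      exact ((ihw (x ++ [b]) y).ite_zero _).add
        (((ihx y).ite_zero _).isPosAt_mul (IsPosAt.X_zpow one_pos _))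

theorem isPosAt_one_wordShuffle_apply_append (w x : Word r) :
    IsPosAt 1 (wordShuffle p w x (w ++ x)) := by
  rcases List.eq_nil_or_concat' w with rfl | ⟨w, a, rfl⟩
  · simpa [wordShuffle_nil_left] using IsPosAt.one 1
  induction x using List.reverseRecOn with
  | nil => simpa [wordShuffle_nil_right] using IsPosAt.one 1
  | append_singleton x b ih =>
    rw [← List.append_assoc, wordShuffle_append_singleton_apply, if_pos rfl]
    exact ((isNonnegAt_one_wordShuffle_apply p _ _ _).ite_zero _).add_isPosAt
      ((IsPosAt.X_zpow one_pos _).mul ih)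

end WordShuffle

/-! ### Good words -/

section Support

variable {p : Fin r → Fin r → ℤ} {f g : FA r}

theorem exists_isShuffle_of_mem_support_qShuffle {z : Word r}
    (hz : z ∈ (qShuffle p f g).support) : ∃ w ∈ f.support, ∃ x ∈ g.support, IsShuffle w x z := by
  rw [Finsupp.mem_support_iff, qShuffle_apply] at hz
  obtain ⟨w, hw, hwz⟩ := Finset.exists_ne_zero_of_sum_ne_zero hz
  obtain ⟨x, hx, hxz⟩ := Finset.exists_ne_zero_of_sum_ne_zero hwz
  exact ⟨w, hw, x, hx, isShuffle_of_wordShuffle_apply_ne_zero p (right_ne_zero_of_mul hxz)⟩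

theorem qShuffle_apply_eq_mul_of_unique {w x z : Word r}
    (h : ∀ w' ∈ f.support, ∀ x' ∈ g.support, IsShuffle w' x' z → w' = w ∧ x' = x) :
    qShuffle p f g z = f w * g x * wordShuffle p w x z := by
  have hzero {w' x' : Word r} (hw' : f w' ≠ 0) (hx' : g x' ≠ 0) (hne : w' = w → x' ≠ x) :
      wordShuffle p w' x' z = 0 := by_contra fun hz =>
    have heq := h w' (Finsupp.mem_support_iff.2 hw') x' (Finsupp.mem_support_iff.2 hx')
      (isShuffle_of_wordShuffle_apply_ne_zero p hz)
    hne heq.1 heq.2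
  rw [qShuffle_apply, Finsupp.sum_eq_single w]
  · by_cases hw : f w = 0
    · simp [hw]
    rw [Finsupp.sum_eq_single x _ (by simp)]
    exact fun x' hx' hne => by rw [hzero hw hx' fun _ => hne, mul_zero]
  · exact fun w' hw' hne => Finset.sum_eq_zero fun x' hx' => by
      simp only [hzero hw' (Finsupp.mem_support_iff.1 hx') fun heq => absurd heq hne, mul_zero]
  · simp

end Support

theorem deg_eq_deg_iff_perm {w x : Word r} : deg w = deg x ↔ w.Perm x :=
  funext_iff.trans List.perm_iff_count.symm

theorem isGood_iff {p : Fin r → Fin r → ℤ} {g : Word r} :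
    IsGood p g ↔ ∃ u, InU p u ∧ u g ≠ 0 ∧ ∀ w ∈ u.support, w.Perm g ∧ w ≤ g := by
  constructor
  · rintro ⟨u, hu, ⟨ν, hν⟩, hg, hmax⟩
    exact ⟨u, hu, hg, fun w hw =>
      ⟨deg_eq_deg_iff_perm.1 ((hν w hw).trans (hν g (Finsupp.mem_support_iff.2 hg)).symm),
        wle_iff_le.1 (hmax w hw)⟩⟩
  · rintro ⟨u, hu, hg, h⟩
    exact ⟨u, hu, ⟨deg g, fun w hw => deg_eq_deg_iff_perm.2 (h w hw).1⟩, hg,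
      fun w hw => wle_iff_le.2 (h w hw).2⟩

namespace IsGood

variable {p : Fin r → Fin r → ℤ}

theorem nil : IsGood p [] :=
  isGood_iff.2 ⟨Finsupp.single [] 1, InU.one, by simp, by simp⟩

theorem of_cons {a : Fin r} {g : Word r} (h : IsGood p (a :: g)) : IsGood p g := by
  obtain ⟨u, hu, hg, hsupp⟩ := isGood_iff.1 h
  refine isGood_iff.2 ⟨deleteFirst a u, hu.deleteFirst a, hg, fun w hw => ?_⟩
  obtain ⟨hperm, hle⟩ := hsupp (a :: w) (mem_support_deleteFirst.1 hw)
  exact ⟨hperm.cons_inv, not_lt.1 fun hlt =>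
    hle.not_gt (List.cons_lt_cons_iff.2 (Or.inr ⟨rfl, hlt⟩))⟩

theorem of_append_singleton {a : Fin r} {g : Word r} (h : IsGood p (g ++ [a])) : IsGood p g := by
  obtain ⟨u, hu, hg, hsupp⟩ := isGood_iff.1 h
  refine isGood_iff.2 ⟨deleteLast a u, hu.deleteLast a, hg, fun w hw => ?_⟩
  obtain ⟨hperm, hle⟩ := hsupp (w ++ [a]) (mem_support_deleteLast.1 hw)
  have hperm' : w.Perm g := (List.perm_append_right_iff [a]).1 hperm
  exact ⟨hperm', not_lt.1 fun hlt =>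
    hle.not_gt (append_lt_append_of_length_le hlt hperm'.length_eq.le [a] [a])⟩

theorem of_suffix {l g : Word r} (hg : IsGood p g) (h : l <:+ g) : IsGood p l := by
  obtain ⟨s, rfl⟩ := h
  induction s with
  | nil => exact hg
  | cons a s ih => exact ih hg.of_cons

theorem of_prefix {l g : Word r} (hg : IsGood p g) (h : l <+: g) : IsGood p l := by
  obtain ⟨s, rfl⟩ := h
  induction s using List.reverseRecOn with
  | nil => rwa [List.append_nil] at hg
  | append_singleton s a ih => exact ih (List.append_assoc l s [a] ▸ hg).of_append_singleton

theorem of_infix {l g : Word r} (hg : IsGood p g) (h : l <:+: g) : IsGood p l :=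
  have ⟨_, hprefix, hsuffix⟩ := List.infix_iff_prefix_suffix.1 h
  (hg.of_suffix hsuffix).of_prefix hprefix

theorem append {l w : Word r} (hl : IsGood p l) (hw : IsGood p w)
    (hmax : ∀ z, IsShuffle l w z → z ≤ l ++ w) : IsGood p (l ++ w) := by
  obtain ⟨f, hf, hfl, hfsupp⟩ := isGood_iff.1 hl
  obtain ⟨g, hg, hgw, hgsupp⟩ := isGood_iff.1 hw
  have hle : ∀ y ∈ f.support, ∀ x ∈ g.support, ∀ z, IsShuffle y x z →
      z ≤ l ++ w ∧ (z = l ++ w → y = l ∧ x = w) := by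
    intro y hy x hx z hz
    obtain ⟨hyperm, hyl⟩ := hfsupp y hy
    obtain ⟨hxperm, hxw⟩ := hgsupp x hx
    obtain ⟨z', hz', hzz', heq⟩ := hz.exists_ge hyperm.length_eq hxperm.length_eq hyl hxw
    exact ⟨hzz'.trans (hmax z' hz'), fun hzmax => heq (hzz'.antisymm (hzmax ▸ hmax z' hz'))⟩
  refine isGood_iff.2 ⟨qShuffle p f g, hf.qShuffle hg, ?_, fun z hz => ?_⟩
  · rw [qShuffle_apply_eq_mul_of_unique fun y hy x hx hz => (hle y hy x hx _ hz).2 rfl]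
    exact mul_ne_zero (mul_ne_zero hfl hgw) (isPosAt_one_wordShuffle_apply_append p l w).ne_zero
  · obtain ⟨y, hy, x, hx, hz⟩ := exists_isShuffle_of_mem_support_qShuffle hz
    exact ⟨hz.perm.trans ((hfsupp y hy).1.append (hgsupp x hx).1), (hle y hy x hx z hz).1⟩

theorem flatten {L : List (Word r)} (hL : ∀ l ∈ L, IsGood p l ∧ IsLyndon l)
    (hchain : L.IsChain (· ≥ ·)) : IsGood p L.flatten := by
  induction L with
  | nil => exact nil
  | cons l L ih =>
    obtain ⟨⟨hgood, hlyndon⟩, hL⟩ := List.forall_mem_cons.1 hL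
    have hle : ∀ m ∈ L, m ≤ l := (List.pairwise_cons.1 (List.isChain_iff_pairwise.1 hchain)).1
    exact hgood.append (ih hL hchain.tail) fun z => hlyndon.shuffle_le_append_flatten hle

end IsGood

theorem good_iff_nonincreasing_product_of_good_lyndon_general (p : Fin r → Fin r → ℤ)
    (g : Word r) :
    IsGood p g ↔
      ∃ L : List (Word r),
        (∀ l ∈ L, IsGood p l ∧ IsLyndon l) ∧ L.IsChain (fun a b => wle b a) ∧ g = L.flatten := by
  simp only [wle_iff_le]
  constructor
  · intro hg
    obtain ⟨L, hlyndon, hchain, rfl⟩ := exists_lyndon_factorization g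
    exact ⟨L, fun l hl => ⟨hg.of_infix (List.infix_of_mem_flatten hl), hlyndon l hl⟩, hchain, rfl⟩
  · rintro ⟨L, hL, hchain, rfl⟩
    exact IsGood.flatten hL hchain

/-- Proposition 3.6: a word is good if and only if it is a nonincreasing concatenation
of good Lyndon words. -/
theorem good_iff_nonincreasing_product_of_good_lyndon {r : ℕ} (hr : 1 ≤ r)
    (C : CartanData r) (g : Word r) :
    IsGood C.p g ↔
      ∃ L : List (Word r),
        (∀ l ∈ L, IsGood C.p l ∧ IsLyndon l) ∧
        List.Chain' (fun a b => wle b a) L ∧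
        g = L.flatten :=
  good_iff_nonincreasing_product_of_good_lyndon_general C.p g
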